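/- (Linear divergence for product RAAGs.) Suppose the vertex set of Γ is partitioned as V = A ⊔ B with A and B nonempty and with every vertex of A joined to every vertex of B by an edge of Γ, so that A_Γ = A_{Γ[A]} × A_{Γ[B]} is a nontrivial direct product. Then for every natural number r and any two elements g₁, g₂ ∈ A_Γ with |g₁| = |g₂| = r, there is a path in the Cayley graph of A_Γ from g₁ to g₂ of length at most 6r, all of whose vertices have word length at least r (i.e., the path avoids the open ball of radius r about the identity). -/

import Mathlib

/-- The commutator relators of the right-angled Artin group on the graph `Γ`. -/
def raagRels {V : Type*} (Γ : SimpleGraph V) : Set (FreeGroup V) :=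
  {r | ∃ u v : V, Γ.Adj u v ∧
    r = FreeGroup.of u * FreeGroup.of v * (FreeGroup.of u)⁻¹ * (FreeGroup.of v)⁻¹}

/-- The right-angled Artin group `A_Γ` on the graph `Γ`. -/
abbrev RAAG {V : Type*} (Γ : SimpleGraph V) : Type _ :=
  PresentedGroup (raagRels Γ)

/-- The generator of `A_Γ` corresponding to the vertex `v`. -/
def RAAG.gen {V : Type*} (Γ : SimpleGraph V) (v : V) : RAAG Γ :=
  PresentedGroup.of v

/-- Word length of `g` with respect to a generating set `X`: the least `n` such that
`g` is a product of `n` elements of `X ∪ X⁻¹`. -/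
noncomputable def wlen {G : Type*} [Group G] (X : Set G) (g : G) : ℕ :=
  sInf {n | ∃ l : List G, l.length = n ∧ (∀ x ∈ l, x ∈ X ∨ x⁻¹ ∈ X) ∧ l.prod = g}

/-- Word length in `A_Γ` with respect to the vertex generating set. -/
noncomputable def RAAG.wordLength {V : Type*} (Γ : SimpleGraph V) (g : RAAG Γ) : ℕ :=
  wlen (Set.range (RAAG.gen Γ)) g

/-- The letter `v^e` (with `e = true` for `v` and `e = false` for `v⁻¹`). -/
def RAAG.letter {V : Type*} (Γ : SimpleGraph V) (v : V) (e : Bool) : RAAG Γ :=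
  if e then RAAG.gen Γ v else (RAAG.gen Γ v)⁻¹

/-!
Write `C(v)` for the centralizer of a vertex generator `v`. Left multiplication makes `A_Γ` act on
`A_Γ × ℤ`, where `v` also raises the integer by one over the points of `C(v)`; generators adjacent
to `v` preserve `C(v)`, so the relators act trivially. Following the integer from `(1, 0)` gives a
signed count of crossings of `C(v)`. A geodesic word ending in `v^{±1}` never crosses `C(v)` in the
opposite direction, since two opposite crossings would cancel. So no element has geodesic words
ending in both `v` and `v⁻¹`: from every element, one of the two directions `v^{±1}` leads away
from the identity, and then does so forever.

In a join, lengths add up over the two factors. Let `g₁ = (a₁, b₁)` and `g₂ = (a₂, b₂)` have length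
`r`. Climb from `g₁` in the second factor until that coordinate alone has length `r`, and from `g₂`
likewise in the first factor. The two points reached are joined by a path outside the ball that
changes the first coordinate and then the second. The total length is `2r + 2(|a₁| + |b₂|)`.
Exchanging the factors gives `2r + 2(|b₁| + |a₂|)`, and the smaller of the two is at most `4r`.
-/

section WordLength

variable {G : Type*} [Group G] {X : Set G}

lemma wlen_prod_le {l : List G} (hl : ∀ x ∈ l, x ∈ X ∨ x⁻¹ ∈ X) : wlen X l.prod ≤ l.length :=
  Nat.sInf_le ⟨l, rfl, hl, rfl⟩

@[simp] lemma wlen_one : wlen X (1 : G) = 0 :=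
  Nat.le_zero.1 (wlen_prod_le (l := []) (by simp))

lemma wlen_le_one {x : G} (hx : x ∈ X ∨ x⁻¹ ∈ X) : wlen X x ≤ 1 := by
  simpa using wlen_prod_le (l := [x]) (by simpa using hx)

lemma exists_prod_eq_and_length_eq_wlen (hX : Subgroup.closure X = ⊤) (g : G) :
    ∃ l : List G, (∀ x ∈ l, x ∈ X ∨ x⁻¹ ∈ X) ∧ l.prod = g ∧ l.length = wlen X g := by
  have hg : g ∈ Submonoid.closure (X ∪ X⁻¹) := by
    rw [← Subgroup.closure_toSubmonoid, hX]
    exact Subgroup.mem_top g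
  obtain ⟨l₀, hl₀, hprod₀⟩ := Submonoid.exists_list_of_mem_closure hg
  obtain ⟨l, hlen, hl, hprod⟩ := Nat.sInf_mem (s := {n | ∃ l : List G, l.length = n ∧
    (∀ x ∈ l, x ∈ X ∨ x⁻¹ ∈ X) ∧ l.prod = g}) ⟨l₀.length, l₀, rfl, hl₀, hprod₀⟩
  exact ⟨l, hl, hprod, hlen⟩

lemma wlen_mul_le (hX : Subgroup.closure X = ⊤) (g h : G) :
    wlen X (g * h) ≤ wlen X g + wlen X h := by
  obtain ⟨l, hl, hprod, hlen⟩ := exists_prod_eq_and_length_eq_wlen hX g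
  obtain ⟨m, hm, hprod', hlen'⟩ := exists_prod_eq_and_length_eq_wlen hX h
  rw [← hlen, ← hlen', ← hprod, ← hprod', ← List.prod_append, ← List.length_append]
  exact wlen_prod_le fun x hx ↦ (List.mem_append.1 hx).elim (hl x) (hm x)

lemma wlen_inv (g : G) : wlen X g⁻¹ = wlen X g := by
  have inv_word : ∀ (h : G) (n : ℕ),
      (∃ l : List G, l.length = n ∧ (∀ x ∈ l, x ∈ X ∨ x⁻¹ ∈ X) ∧ l.prod = h) →
      ∃ l : List G, l.length = n ∧ (∀ x ∈ l, x ∈ X ∨ x⁻¹ ∈ X) ∧ l.prod = h⁻¹ := by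
    rintro h n ⟨l, hlen, hl, rfl⟩
    refine ⟨(l.map (·⁻¹)).reverse, by simpa using hlen, fun x hx ↦ ?_,
      l.prod_inv_reverse.symm⟩
    simpa [or_comm] using hl x⁻¹ (by simpa using hx)
  unfold wlen
  congr 1
  ext n
  exact ⟨fun h ↦ inv_inv g ▸ inv_word _ n h, inv_word g n⟩

lemma geodesic_induction (hX : Subgroup.closure X = ⊤) {P : G → Prop} (one : P 1)
    (mul : ∀ x g, (x ∈ X ∨ x⁻¹ ∈ X) → wlen X (x * g) = wlen X g + 1 → P g → P (x * g))
    (g : G) : P g := by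
  obtain ⟨l, hl, rfl, hlen⟩ := exists_prod_eq_and_length_eq_wlen hX g
  induction l with
  | nil => exact one
  | cons x l ih =>
    rw [List.forall_mem_cons] at hl
    rw [List.prod_cons, List.length_cons] at hlen
    have hmul := wlen_mul_le hX x l.prod
    have hx := wlen_le_one hl.1
    have hprod := wlen_prod_le hl.2
    rw [List.prod_cons]
    exact mul x l.prod hl.1 (by omega) (ih hl.2 (by omega))

section Parity

variable {χ : G →* ℤˣ}

lemma map_eq_neg_one_of_mem_or_inv_mem (hχ : ∀ x ∈ X, χ x = -1) {x : G}
    (hx : x ∈ X ∨ x⁻¹ ∈ X) : χ x = -1 :=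
  hx.elim (hχ x) fun h ↦ by simpa using congrArg (·⁻¹) (hχ _ h)

lemma map_eq_neg_one_pow_wlen (hχ : ∀ x ∈ X, χ x = -1) (hX : Subgroup.closure X = ⊤) (g : G) :
    χ g = (-1) ^ wlen X g := by
  induction g using geodesic_induction hX with
  | one => simp
  | mul x g hx hlen ih =>
    rw [map_mul, hlen, pow_succ', map_eq_neg_one_of_mem_or_inv_mem hχ hx, ih]

lemma wlen_mul_eq_add_one_or (hχ : ∀ x ∈ X, χ x = -1) (hX : Subgroup.closure X = ⊤) (g : G)
    {x : G} (hx : x ∈ X ∨ x⁻¹ ∈ X) :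
    wlen X (g * x) = wlen X g + 1 ∨ wlen X (g * x) + 1 = wlen X g := by
  have hne : wlen X (g * x) ≠ wlen X g := by
    intro h
    have hsign := map_eq_neg_one_pow_wlen hχ hX (g * x)
    rw [h, ← map_eq_neg_one_pow_wlen hχ hX g, map_mul,
      map_eq_neg_one_of_mem_or_inv_mem hχ hx, mul_eq_left] at hsign
    exact absurd hsign (by decide)
  have hup := wlen_mul_le hX g x
  have hdown := wlen_mul_le hX (g * x) x⁻¹
  rw [mul_inv_cancel_right, wlen_inv] at hdown
  have hx1 := wlen_le_one hx
  omega

lemma wlen_eq_one (hχ : ∀ x ∈ X, χ x = -1) (hX : Subgroup.closure X = ⊤) {x : G}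
    (hx : x ∈ X ∨ x⁻¹ ∈ X) : wlen X x = 1 := by
  simpa using wlen_mul_eq_add_one_or hχ hX 1 hx

end Parity

/-- The part of the Cayley graph of `G` with respect to `X` lying outside the open ball of radius
`r` about `1`. All of `G` is kept as vertex set: the elements of the ball become isolated
vertices. -/
def outerCayleyGraph (X : Set G) (r : ℕ) : SimpleGraph G where
  Adj x y := wlen X (x⁻¹ * y) = 1 ∧ r ≤ wlen X x ∧ r ≤ wlen X y
  symm := ⟨fun x y ⟨h, hx, hy⟩ ↦ ⟨by rwa [← wlen_inv, mul_inv_rev, inv_inv], hy, hx⟩⟩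
  loopless := ⟨fun x h ↦ by simp at h⟩

lemma outerCayleyGraph_edist_mul_le_one {r : ℕ} {g x : G} (hx : wlen X x = 1)
    (hg : r ≤ wlen X g) (hgx : r ≤ wlen X (g * x)) :
    (outerCayleyGraph X r).edist g (g * x) ≤ 1 :=
  have hadj : (outerCayleyGraph X r).Adj g (g * x) := ⟨by rwa [inv_mul_cancel_left], hg, hgx⟩
  (SimpleGraph.edist_eq_one_iff_adj.2 hadj).le

lemma outerCayleyGraph_edist_mul_pow_le {r : ℕ} {g x : G} (hx : wlen X x = 1)
    (h : ∀ n, r ≤ wlen X (g * x ^ n)) (n : ℕ) :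
    (outerCayleyGraph X r).edist g (g * x ^ n) ≤ n := by
  induction n with
  | zero => simp
  | succ n ih =>
    have hstep : (outerCayleyGraph X r).edist (g * x ^ n) (g * x ^ (n + 1)) ≤ 1 := by
      have hpow : g * x ^ (n + 1) = g * x ^ n * x := by rw [pow_succ, mul_assoc]
      exact hpow ▸ outerCayleyGraph_edist_mul_le_one hx (h n) (hpow ▸ h (n + 1))
    exact SimpleGraph.edist_triangle.trans (by simpa using add_le_add ih hstep)

lemma exists_path_of_outerCayleyGraph_edist_le {r n : ℕ} {x y : G} (hx : r ≤ wlen X x)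
    (h : (outerCayleyGraph X r).edist x y ≤ n) :
    ∃ (L : ℕ) (p : ℕ → G), L ≤ n ∧ p 0 = x ∧ p L = y ∧
      (∀ i < L, wlen X ((p i)⁻¹ * p (i + 1)) = 1) ∧ ∀ i ≤ L, r ≤ wlen X (p i) := by
  obtain ⟨w, hw⟩ :=
    SimpleGraph.exists_walk_of_edist_ne_top (h.trans_lt (ENat.natCast_lt_top n)).ne
  refine ⟨w.length, w.getVert, by exact_mod_cast hw.trans_le h, w.getVert_zero,
    w.getVert_length, fun i hi ↦ (w.adj_getVert_succ hi).1, ?_⟩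
  rintro (_ | i) hi
  · simpa using hx
  · exact (w.adj_getVert_succ hi).2.2

end WordLength

namespace RAAG

variable {V : Type*} (Γ : SimpleGraph V)

local notation "ℓ" => wlen (Set.range (gen Γ))

lemma closure_range_gen : Subgroup.closure (Set.range (gen Γ)) = ⊤ :=
  PresentedGroup.closure_range_of (raagRels Γ)

variable {Γ} in
lemma commute_gen {u v : V} (h : Γ.Adj u v) : Commute (gen Γ u) (gen Γ v) := by
  have hrel : gen Γ u * gen Γ v * (gen Γ u)⁻¹ * (gen Γ v)⁻¹ = 1 :=
    PresentedGroup.one_of_mem ⟨u, v, h, rfl⟩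
  rwa [mul_inv_eq_one, mul_inv_eq_iff_eq_mul] at hrel

variable {Γ} in
lemma hom_ext {H : Type*} [Group H] {φ ψ : RAAG Γ →* H} (h : ∀ v, φ (gen Γ v) = ψ (gen Γ v)) :
    φ = ψ :=
  PresentedGroup.ext h

/-- The universal property of `A_Γ`: the homomorphism extending a map on vertices that sends
adjacent vertices to commuting elements. -/
def lift {H : Type*} [Group H] (f : V → H) (hf : ∀ u v, Γ.Adj u v → Commute (f u) (f v)) :
    RAAG Γ →* H :=
  PresentedGroup.toGroup (f := f) (rels := raagRels Γ) (by
    rintro _ ⟨u, v, h, rfl⟩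
    simp [(hf u v h).eq])

@[simp] lemma lift_gen {H : Type*} [Group H] (f : V → H)
    (hf : ∀ u v, Γ.Adj u v → Commute (f u) (f v)) (v : V) : lift Γ f hf (gen Γ v) = f v :=
  PresentedGroup.toGroup.of _

section Letters

lemma letter_mem_or_inv_mem (v : V) (e : Bool) :
    letter Γ v e ∈ Set.range (gen Γ) ∨ (letter Γ v e)⁻¹ ∈ Set.range (gen Γ) := by
  cases e <;> simp [letter]

variable {Γ} in
lemma exists_letter_eq {x : RAAG Γ} (hx : x ∈ Set.range (gen Γ) ∨ x⁻¹ ∈ Set.range (gen Γ)) :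
    ∃ v e, letter Γ v e = x := by
  obtain ⟨v, hv⟩ | ⟨v, hv⟩ := hx
  · exact ⟨v, true, hv⟩
  · exact ⟨v, false, inv_eq_iff_eq_inv.2 hv⟩

lemma letter_not (v : V) (e : Bool) : letter Γ v (!e) = (letter Γ v e)⁻¹ := by
  cases e <;> simp [letter]

variable {Γ} in
lemma commute_letter {v : V} {g : RAAG Γ} (h : Commute (gen Γ v) g) (e : Bool) :
    Commute (letter Γ v e) g := by
  cases e
  exacts [h.inv_left, h]

lemma letter_geodesic_induction {P : RAAG Γ → Prop} (one : P 1)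
    (letter_mul : ∀ v e g, ℓ (letter Γ v e * g) = ℓ g + 1 → P g → P (letter Γ v e * g))
    (g : RAAG Γ) : P g := by
  refine geodesic_induction (closure_range_gen Γ) one (fun x g hx hlen hg ↦ ?_) g
  obtain ⟨v, e, rfl⟩ := exists_letter_eq hx
  exact letter_mul v e g hlen hg

lemma exists_sign_hom : ∃ χ : RAAG Γ →* ℤˣ, ∀ x ∈ Set.range (gen Γ), χ x = -1 :=
  ⟨lift Γ (fun _ ↦ -1) fun _ _ _ ↦ Commute.refl _, by simp⟩

lemma wlen_mul_letter_eq_add_one_or (g : RAAG Γ) (v : V) (e : Bool) :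
    ℓ (g * letter Γ v e) = ℓ g + 1 ∨ ℓ (g * letter Γ v e) + 1 = ℓ g :=
  have ⟨_, hχ⟩ := exists_sign_hom Γ
  wlen_mul_eq_add_one_or hχ (closure_range_gen Γ) g (letter_mem_or_inv_mem Γ v e)

lemma wlen_letter (v : V) (e : Bool) : ℓ (letter Γ v e) = 1 :=
  have ⟨_, hχ⟩ := exists_sign_hom Γ
  wlen_eq_one hχ (closure_range_gen Γ) (letter_mem_or_inv_mem Γ v e)

end Letters

section Crossings

open Classical in
/-- The amount by which the generator `u` shifts the integer over the point `x` in the action of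
`A_Γ` on `A_Γ × ℤ` recording crossings of the centralizer of `v`. -/
noncomputable def crossingShift (v u : V) (x : RAAG Γ) : ℤ :=
  if u = v ∧ Commute (gen Γ v) x then 1 else 0

open Classical in
lemma crossingShift_gen_mul (v : V) {u w : V} (h : Γ.Adj u w) (x : RAAG Γ) :
    crossingShift Γ v u (gen Γ w * x) = crossingShift Γ v u x := by
  have hiff : u = v → (Commute (gen Γ v) (gen Γ w * x) ↔ Commute (gen Γ v) x) := by
    rintro rfl
    exact ⟨fun hx ↦ by simpa using (commute_gen h).inv_right.mul_right hx,
      (commute_gen h).mul_right⟩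
  exact if_congr (and_congr_right hiff) rfl rfl

/-- The permutation of `A_Γ × ℤ` by which the generator `u` acts: left multiplication on the first
factor, shifting the second by `crossingShift Γ v u`. -/
noncomputable def crossingPerm (v u : V) : Equiv.Perm (RAAG Γ × ℤ) :=
  (Equiv.mulLeft (gen Γ u)).prodShear fun x ↦ Equiv.addRight (crossingShift Γ v u x)

lemma commute_crossingPerm (v : V) {u w : V} (h : Γ.Adj u w) :
    Commute (crossingPerm Γ v u) (crossingPerm Γ v w) := by
  ext ⟨x, n⟩ : 1
  refine Prod.ext ?_ ?_
  · simp [crossingPerm, ← mul_assoc, (commute_gen h).eq]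
  · simp [crossingPerm, crossingShift_gen_mul Γ v h, crossingShift_gen_mul Γ v h.symm,
      add_right_comm]

/-- The action of `A_Γ` on `A_Γ × ℤ` in which the integer records crossings of the centralizer
of `v`. -/
noncomputable def crossingHom (v : V) : RAAG Γ →* Equiv.Perm (RAAG Γ × ℤ) :=
  lift Γ (crossingPerm Γ v) fun _ _ ↦ commute_crossingPerm Γ v

lemma crossingHom_apply_fst (v : V) (g : RAAG Γ) (p : RAAG Γ × ℤ) :
    (crossingHom Γ v g p).1 = g * p.1 := by
  induction g using letter_geodesic_induction with
  | one => simp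
  | letter_mul u e g _ ih =>
    have hletter : ∀ q, (crossingHom Γ v (letter Γ u e) q).1 = letter Γ u e * q.1 := by
      cases e <;> simp [letter, crossingHom, crossingPerm, Equiv.Perm.inv_def, Equiv.prodShear]
    rw [map_mul, Equiv.Perm.mul_apply, hletter, ih, mul_assoc]

/-- The signed number of letters `v^{±1}` in a word for `g`, counting only those followed by a
suffix that commutes with `v`. -/
noncomputable def crossings (v : V) (g : RAAG Γ) : ℤ :=
  (crossingHom Γ v g (1, 0)).2

lemma crossings_one (v : V) : crossings Γ v 1 = 0 := by
  simp [crossings]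

lemma crossings_gen_mul (v u : V) (g : RAAG Γ) :
    crossings Γ v (gen Γ u * g) = crossings Γ v g + crossingShift Γ v u g := by
  have hfst : (crossingHom Γ v g (1, 0)).1 = g := by simp [crossingHom_apply_fst]
  have hgen : crossingHom Γ v (gen Γ u) = crossingPerm Γ v u := lift_gen Γ _ _ u
  simp [crossings, hgen, crossingPerm, hfst]

/-- The exponent `±1` of the letter `letter Γ v e`. -/
def letterSign (e : Bool) : ℤ := if e then 1 else -1

lemma crossings_letter_mul_of_ne {v u : V} (h : u ≠ v) (e : Bool) (g : RAAG Γ) :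
    crossings Γ v (letter Γ u e * g) = crossings Γ v g := by
  have hgen : ∀ g, crossings Γ v (gen Γ u * g) = crossings Γ v g := fun g ↦ by
    rw [crossings_gen_mul, crossingShift, if_neg (h ·.1), add_zero]
  cases e
  · simpa [letter] using (hgen ((gen Γ u)⁻¹ * g)).symm
  · exact hgen g

open Classical in
lemma crossings_letter_mul_self (v : V) (e : Bool) (g : RAAG Γ) :
    crossings Γ v (letter Γ v e * g) =
      crossings Γ v g + if Commute (gen Γ v) g then letterSign e else 0 := by
  have hgen : ∀ g, crossings Γ v (gen Γ v * g) =
      crossings Γ v g + if Commute (gen Γ v) g then 1 else 0 := fun g ↦ by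
    simp only [crossings_gen_mul, crossingShift, true_and]
  cases e
  · have hinv := hgen ((gen Γ v)⁻¹ * g)
    have hiff : Commute (gen Γ v) ((gen Γ v)⁻¹ * g) ↔ Commute (gen Γ v) g :=
      ⟨fun h ↦ by simpa using (Commute.refl (gen Γ v)).mul_right h,
        (Commute.refl (gen Γ v)).inv_right.mul_right⟩
    rw [mul_inv_cancel_left, if_congr hiff rfl rfl] at hinv
    rw [hinv]
    split_ifs <;> simp [letter, letterSign]
  · exact hgen g

lemma eq_of_wlen_letter_mul_mul_letter {v : V} {e f : Bool} {w : RAAG Γ}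
    (hw : Commute (gen Γ v) w) (h : ℓ (letter Γ v f * (w * letter Γ v e)) ≠ ℓ w) : f = e := by
  contrapose! h
  rw [Bool.eq_not_of_ne h, letter_not, ← mul_assoc, ((commute_letter hw e).inv_left).eq,
    inv_mul_cancel_right]

lemma letterSign_mul_crossings_pos {w : RAAG Γ} {v : V} {e : Bool}
    (h : ℓ (w * letter Γ v e) = ℓ w + 1) :
    0 < letterSign e * crossings Γ v (w * letter Γ v e) := by
  have hsign : 0 < letterSign e * letterSign e := by cases e <;> decide
  induction w using letter_geodesic_induction with
  | one =>
    have hcount : crossings Γ v (letter Γ v e) = letterSign e := by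
      simpa [crossings_one] using crossings_letter_mul_self Γ v e 1
    rwa [one_mul, hcount]
  | letter_mul u f w hlen ih =>
    rw [mul_assoc] at h ⊢
    have hmul := wlen_mul_le (closure_range_gen Γ) (letter Γ u f) (w * letter Γ v e)
    rw [wlen_letter] at hmul
    have hstep := wlen_mul_letter_eq_add_one_or Γ w v e
    specialize ih (by omega)
    obtain rfl | hu := eq_or_ne u v
    · rw [crossings_letter_mul_self]
      split_ifs with hcomm
      · have hw : Commute (gen Γ u) w := by
          simpa using hcomm.mul_right (commute_letter (Commute.refl (gen Γ u)) e).symm.inv_right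
        obtain rfl := eq_of_wlen_letter_mul_mul_letter Γ hw (e := e) (f := f) (by omega)
        rw [mul_add]
        exact add_pos ih hsign
      · rwa [add_zero]
    · rwa [crossings_letter_mul_of_ne Γ hu]

end Crossings

section Growth

lemma exists_wlen_mul_letter_eq_add_one (g : RAAG Γ) (v : V) :
    ∃ e, ℓ (g * letter Γ v e) = ℓ g + 1 := by
  by_contra! hdown
  have hpos : ∀ e, 0 < letterSign e * crossings Γ v g := fun e ↦ by
    have hlen := (wlen_mul_letter_eq_add_one_or Γ g v !e).resolve_left (hdown _)
    have hcancel : g * letter Γ v (!e) * letter Γ v e = g := by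
      rw [letter_not, inv_mul_cancel_right]
    have := letterSign_mul_crossings_pos Γ (w := g * letter Γ v !e) (v := v) (e := e)
      (by rw [hcancel, hlen])
    rwa [hcancel] at this
  have htrue := hpos true
  have hfalse := hpos false
  simp only [letterSign, if_true, Bool.false_eq_true, if_false] at htrue hfalse
  omega

variable {Γ}

lemma wlen_mul_letter_mul_letter {g : RAAG Γ} {v : V} {e : Bool}
    (h : ℓ (g * letter Γ v e) = ℓ g + 1) :
    ℓ (g * letter Γ v e * letter Γ v e) = ℓ (g * letter Γ v e) + 1 := by
  obtain ⟨f, hf⟩ := exists_wlen_mul_letter_eq_add_one Γ (g * letter Γ v e) v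
  obtain rfl | hfe := eq_or_ne f e
  · exact hf
  · rw [Bool.eq_not_of_ne hfe, letter_not, mul_inv_cancel_right] at hf
    omega

lemma wlen_mul_letter_pow {g : RAAG Γ} {v : V} {e : Bool}
    (h : ℓ (g * letter Γ v e) = ℓ g + 1) (n : ℕ) : ℓ (g * letter Γ v e ^ n) = ℓ g + n := by
  induction n generalizing g with
  | zero => simp
  | succ n ih =>
    rw [pow_succ', ← mul_assoc, ih (wlen_mul_letter_mul_letter h), h]
    ring

end Growth

section Projections

open Classical in
/-- The retraction of `A_Γ` onto the subgroup generated by `S` that kills the other generators. -/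
noncomputable def proj (S : Set V) : RAAG Γ →* RAAG Γ :=
  lift Γ (fun v ↦ if v ∈ S then gen Γ v else 1) fun u v h ↦ by
    split_ifs <;> simp [commute_gen h]

variable {Γ} {S T : Set V}

lemma proj_letter_of_mem {v : V} (h : v ∈ S) (e : Bool) :
    proj Γ S (letter Γ v e) = letter Γ v e := by
  cases e <;> simp [letter, proj, h]

lemma proj_letter_of_notMem {v : V} (h : v ∉ S) (e : Bool) : proj Γ S (letter Γ v e) = 1 := by
  cases e <;> simp [letter, proj, h]

lemma proj_proj_self (g : RAAG Γ) : proj Γ S (proj Γ S g) = proj Γ S g := by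
  suffices (proj Γ S).comp (proj Γ S) = proj Γ S from DFunLike.congr_fun this g
  refine hom_ext fun v ↦ ?_
  by_cases hv : v ∈ S <;> simp [proj, hv]

lemma proj_proj_of_disjoint (h : Disjoint S T) (g : RAAG Γ) : proj Γ S (proj Γ T g) = 1 := by
  suffices (proj Γ S).comp (proj Γ T) = 1 from DFunLike.congr_fun this g
  refine hom_ext fun v ↦ ?_
  by_cases hv : v ∈ T
  · simp [proj, hv, Set.disjoint_right.1 h hv]
  · simp [proj, hv]

lemma commute_map_map {H : Type*} [Group H] {φ ψ : RAAG Γ →* H}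
    (h : ∀ u v, Commute (φ (gen Γ u)) (ψ (gen Γ v))) (g k : RAAG Γ) :
    Commute (φ g) (ψ k) := by
  have hgen : ∀ u, Commute (φ (gen Γ u)) (ψ k) := fun u ↦
    (Subgroup.mem_centralizer_singleton_iff.1 <| PresentedGroup.generated_by _
      ((Subgroup.centralizer {φ (gen Γ u)}).comap ψ)
      (fun v ↦ Subgroup.mem_centralizer_singleton_iff.2 (h u v).symm) k).symm
  exact Subgroup.mem_centralizer_singleton_iff.1 <| PresentedGroup.generated_by _
    ((Subgroup.centralizer {ψ k}).comap φ)
    (fun u ↦ Subgroup.mem_centralizer_singleton_iff.2 (hgen u)) g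

lemma wlen_proj_add_wlen_proj_le (h : Disjoint S T) (g : RAAG Γ) :
    ℓ (proj Γ S g) + ℓ (proj Γ T g) ≤ ℓ g := by
  induction g using letter_geodesic_induction with
  | one => simp
  | letter_mul v e g hlen ih =>
    have hletter : ℓ (proj Γ S (letter Γ v e)) + ℓ (proj Γ T (letter Γ v e)) ≤ 1 := by
      by_cases hS : v ∈ S
      · simp [proj_letter_of_mem hS, proj_letter_of_notMem (Set.disjoint_left.1 h hS), wlen_letter]
      · by_cases hT : v ∈ T
        · simp [proj_letter_of_notMem hS, proj_letter_of_mem hT, wlen_letter]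
        · simp [proj_letter_of_notMem hS, proj_letter_of_notMem hT]
    have hS := wlen_mul_le (closure_range_gen Γ) (proj Γ S (letter Γ v e)) (proj Γ S g)
    have hT := wlen_mul_le (closure_range_gen Γ) (proj Γ T (letter Γ v e)) (proj Γ T g)
    rw [map_mul, map_mul]
    omega

lemma edist_mul_proj_le {r : ℕ} {x : RAAG Γ} (h : ∀ k, r ≤ ℓ (x * proj Γ S k)) (k : RAAG Γ) :
    (outerCayleyGraph (Set.range (gen Γ)) r).edist x (x * proj Γ S k) ≤ ℓ k := by
  induction k using letter_geodesic_induction generalizing x with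
  | one => simp
  | letter_mul v e k hlen ih =>
    rw [map_mul, ← mul_assoc, hlen, Nat.cast_succ, add_comm]
    have htail := ih (x := x * proj Γ S (letter Γ v e)) fun j ↦ by
      rw [mul_assoc, ← map_mul]
      exact h _
    refine SimpleGraph.edist_triangle.trans (add_le_add ?_ htail)
    by_cases hv : v ∈ S
    · have hx := h 1
      have hxv := h (letter Γ v e)
      rw [map_one, mul_one] at hx
      rw [proj_letter_of_mem hv] at hxv ⊢
      exact outerCayleyGraph_edist_mul_le_one (wlen_letter Γ v e) hx hxv
    · simp [proj_letter_of_notMem hv]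

end Projections

section Join

/-- `Γ` is the join of its induced subgraphs on `A` and `B`. Disjointness is automatic, as `Γ` has
no loops. -/
structure IsJoin (A B : Set V) : Prop where
  union_eq_univ : A ∪ B = Set.univ
  adj : ∀ a ∈ A, ∀ b ∈ B, Γ.Adj a b

variable {Γ} {A B : Set V}

namespace IsJoin

lemma symm (h : IsJoin Γ A B) : IsJoin Γ B A where
  union_eq_univ := Set.union_comm A B ▸ h.union_eq_univ
  adj b hb a ha := (h.adj a ha b hb).symm

lemma disjoint (h : IsJoin Γ A B) : Disjoint A B :=
  Set.disjoint_left.2 fun v hA hB ↦ (h.adj v hA v hB).ne rfl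

lemma commute_proj_proj (h : IsJoin Γ A B) (g k : RAAG Γ) :
    Commute (proj Γ A g) (proj Γ B k) := by
  refine commute_map_map (fun u v ↦ ?_) g k
  by_cases hu : u ∈ A
  · by_cases hv : v ∈ B
    · simpa [proj, hu, hv] using commute_gen (h.adj u hu v hv)
    · simp [proj, hv]
  · simp [proj, hu]

lemma proj_mul_proj (h : IsJoin Γ A B) (g : RAAG Γ) : proj Γ A g * proj Γ B g = g := by
  suffices ((proj Γ A).noncommCoprod (proj Γ B) h.commute_proj_proj).comp
      ((MonoidHom.id _).prod (MonoidHom.id _)) = MonoidHom.id _ from DFunLike.congr_fun this g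
  refine hom_ext fun v ↦ ?_
  obtain hA | hB : v ∈ A ∪ B := h.union_eq_univ ▸ Set.mem_univ v
  · simp [proj, hA, Set.disjoint_left.1 h.disjoint hA]
  · simp [proj, hB, Set.disjoint_right.1 h.disjoint hB]

lemma wlen_proj_add_wlen_proj (h : IsJoin Γ A B) (g : RAAG Γ) :
    ℓ (proj Γ A g) + ℓ (proj Γ B g) = ℓ g := by
  refine (wlen_proj_add_wlen_proj_le h.disjoint g).antisymm ?_
  conv_lhs => rw [← h.proj_mul_proj g]
  exact wlen_mul_le (closure_range_gen Γ) _ _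

lemma edist_proj_mul_proj_le (h : IsJoin Γ A B) {r : ℕ} {x : RAAG Γ}
    (hx : r ≤ ℓ (proj Γ B x)) (y : RAAG Γ) :
    (outerCayleyGraph (Set.range (gen Γ)) r).edist x (proj Γ A y * proj Γ B x) ≤
      ↑(ℓ (proj Γ A x) + ℓ (proj Γ A y)) := by
  have houtside : ∀ k, r ≤ ℓ (x * proj Γ A k) := fun k ↦ by
    have hadd := h.wlen_proj_add_wlen_proj (x * proj Γ A k)
    rw [map_mul (proj Γ B), proj_proj_of_disjoint h.disjoint.symm, mul_one] at hadd
    omega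
  have hend : x * proj Γ A ((proj Γ A x)⁻¹ * proj Γ A y) = proj Γ A y * proj Γ B x := by
    have hx_inv : x * (proj Γ A x)⁻¹ = proj Γ B x := by
      rw [mul_inv_eq_iff_eq_mul, ← (h.commute_proj_proj x x).eq, h.proj_mul_proj]
    rw [map_mul, map_inv, proj_proj_self, proj_proj_self, ← mul_assoc, hx_inv,
      (h.commute_proj_proj y x).eq]
  calc (outerCayleyGraph (Set.range (gen Γ)) r).edist x (proj Γ A y * proj Γ B x)
    _ ≤ ↑(ℓ ((proj Γ A x)⁻¹ * proj Γ A y)) := hend ▸ edist_mul_proj_le houtside _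
    _ ≤ ↑(ℓ (proj Γ A x) + ℓ (proj Γ A y)) := by
      rw [← wlen_inv (proj Γ A x)]
      exact_mod_cast wlen_mul_le (closure_range_gen Γ) _ _

lemma edist_le_wlen_add_wlen (h : IsJoin Γ A B) {r : ℕ} {x y : RAAG Γ}
    (hx : r ≤ ℓ (proj Γ B x)) (hy : r ≤ ℓ (proj Γ A y)) :
    (outerCayleyGraph (Set.range (gen Γ)) r).edist x y ≤ ↑(ℓ x + ℓ y) := by
  have hfirst := h.edist_proj_mul_proj_le hx y
  have hsecond := h.symm.edist_proj_mul_proj_le hy x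
  rw [SimpleGraph.edist_comm, ← (h.commute_proj_proj y x).eq] at hsecond
  refine (SimpleGraph.edist_triangle.trans (add_le_add hfirst hsecond)).trans_eq ?_
  rw [← h.wlen_proj_add_wlen_proj x, ← h.wlen_proj_add_wlen_proj y]
  push_cast
  ring

lemma exists_edist_le_wlen_proj (h : IsJoin Γ A B) (hB : B.Nonempty) (g : RAAG Γ) :
    ∃ x, (outerCayleyGraph (Set.range (gen Γ)) (ℓ g)).edist g x ≤ ℓ (proj Γ A g) ∧
      ℓ x = ℓ g + ℓ (proj Γ A g) ∧ ℓ (proj Γ B x) = ℓ g := by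
  obtain ⟨b, hb⟩ := hB
  obtain ⟨e, he⟩ := exists_wlen_mul_letter_eq_add_one Γ g b
  have hlen := wlen_mul_letter_pow he
  set x := g * letter Γ b e ^ ℓ (proj Γ A g)
  have hclimb : (outerCayleyGraph (Set.range (gen Γ)) (ℓ g)).edist g x ≤ ℓ (proj Γ A g) :=
    outerCayleyGraph_edist_mul_pow_le (wlen_letter Γ b e) (fun n ↦ by rw [hlen]; omega) _
  have hprojA : proj Γ A x = proj Γ A g := by
    simp [x, proj_letter_of_notMem (Set.disjoint_right.1 h.disjoint hb)]
  have hadd := h.wlen_proj_add_wlen_proj x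
  rw [hprojA, hlen] at hadd
  exact ⟨x, hclimb, hlen _, by omega⟩

lemma edist_le_of_wlen_eq (h : IsJoin Γ A B) (hA : A.Nonempty) (hB : B.Nonempty) {r : ℕ}
    {g₁ g₂ : RAAG Γ} (h₁ : ℓ g₁ = r) (h₂ : ℓ g₂ = r) :
    (outerCayleyGraph (Set.range (gen Γ)) r).edist g₁ g₂ ≤
      ↑(2 * (r + ℓ (proj Γ A g₁) + ℓ (proj Γ B g₂))) := by
  obtain ⟨x, hclimb₁, hx, hxB⟩ := h.exists_edist_le_wlen_proj hB g₁
  obtain ⟨y, hclimb₂, hy, hyA⟩ := h.symm.exists_edist_le_wlen_proj hA g₂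
  rw [h₁] at hclimb₁ hx hxB
  rw [h₂] at hclimb₂ hy hyA
  rw [SimpleGraph.edist_comm] at hclimb₂
  have hmiddle := h.edist_le_wlen_add_wlen hxB.ge hyA.ge
  calc (outerCayleyGraph (Set.range (gen Γ)) r).edist g₁ g₂
    _ ≤ ↑(ℓ (proj Γ A g₁)) + (↑(ℓ x + ℓ y) + ↑(ℓ (proj Γ B g₂))) :=
      SimpleGraph.edist_triangle.trans <| add_le_add hclimb₁ <|
        SimpleGraph.edist_triangle.trans <| add_le_add hmiddle hclimb₂
    _ = ↑(2 * (r + ℓ (proj Γ A g₁) + ℓ (proj Γ B g₂))) := by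
      norm_cast
      omega

lemma edist_le_four_mul (h : IsJoin Γ A B) (hA : A.Nonempty) (hB : B.Nonempty) {r : ℕ}
    {g₁ g₂ : RAAG Γ} (h₁ : ℓ g₁ = r) (h₂ : ℓ g₂ = r) :
    (outerCayleyGraph (Set.range (gen Γ)) r).edist g₁ g₂ ≤ ↑(4 * r) := by
  have hadd₁ := h.wlen_proj_add_wlen_proj g₁
  have hadd₂ := h.wlen_proj_add_wlen_proj g₂
  obtain hle | hlt := le_or_gt (ℓ (proj Γ A g₁) + ℓ (proj Γ B g₂)) r
  · exact (h.edist_le_of_wlen_eq hA hB h₁ h₂).trans (Nat.cast_le.2 (by omega))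
  · exact (h.symm.edist_le_of_wlen_eq hB hA h₁ h₂).trans (Nat.cast_le.2 (by omega))

end IsJoin

end Join

end RAAG

theorem raag_product_linear_divergence_general {V : Type*} (Γ : SimpleGraph V)
    (A B : Set V) (hA : A.Nonempty) (hB : B.Nonempty) (hcover : A ∪ B = Set.univ)
    (hjoin : ∀ a ∈ A, ∀ b ∈ B, Γ.Adj a b) (r : ℕ) (g₁ g₂ : RAAG Γ)
    (h₁ : RAAG.wordLength Γ g₁ = r) (h₂ : RAAG.wordLength Γ g₂ = r) :
    ∃ (L : ℕ) (p : ℕ → RAAG Γ),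
      L ≤ 4 * r ∧ p 0 = g₁ ∧ p L = g₂ ∧
      (∀ i < L, RAAG.wordLength Γ ((p i)⁻¹ * p (i + 1)) = 1) ∧
      (∀ i ≤ L, r ≤ RAAG.wordLength Γ (p i)) :=
  have hΓ : RAAG.IsJoin Γ A B := ⟨hcover, hjoin⟩
  exists_path_of_outerCayleyGraph_edist_le h₁.ge (hΓ.edist_le_four_mul hA hB h₁ h₂)

theorem raag_product_linear_divergence {V : Type*} [Fintype V] (Γ : SimpleGraph V)
    (A B : Set V) (hA : A.Nonempty) (hB : B.Nonempty)
    (hdisj : Disjoint A B) (hcover : A ∪ B = Set.univ)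
    (hjoin : ∀ a ∈ A, ∀ b ∈ B, Γ.Adj a b) :
    ∀ (r : ℕ) (g₁ g₂ : RAAG Γ),
      RAAG.wordLength Γ g₁ = r → RAAG.wordLength Γ g₂ = r →
      ∃ (L : ℕ) (p : ℕ → RAAG Γ),
        L ≤ 6 * r ∧ p 0 = g₁ ∧ p L = g₂ ∧
        (∀ i < L, RAAG.wordLength Γ ((p i)⁻¹ * p (i + 1)) = 1) ∧
        (∀ i ≤ L, r ≤ RAAG.wordLength Γ (p i)) := by
  intro r g₁ g₂ h₁ h₂
  obtain ⟨L, p, hL, hp⟩ :=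
    raag_product_linear_divergence_general Γ A B hA hB hcover hjoin r g₁ g₂ h₁ h₂
  exact ⟨L, p, hL.trans (by omega), hp⟩
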